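/- The Catalan constant satisfies G = 209/225 − Σ_{ℓ=1}^∞ (ℓ/16^ℓ)·(ζ(2ℓ+1)−1), where the series converges absolutely. -/

import Mathlib

/-!
Write `ζ(2ℓ+1) - 1 = ∑_{m≥2} m^{-(2ℓ+1)}`. The resulting double series has nonnegative terms, so it
may be summed over `ℓ` first. With `x = 1/(16m²)`, the identity `∑ ℓ x^ℓ = x/(1-x)²` gives
`∑_ℓ ℓ/16^ℓ m^{-(2ℓ+1)} = 16m/(16m²-1)² = 1/(4m-1)² - 1/(4m+1)²`.
Summing over `m ≥ 2` produces minus the tail of the Catalan series beyond `1 - 1/9 + 1/25 = 209/225`.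
In the code the indices start at zero: `ℓ + 1` plays the role of `ℓ` above, and `m = n + 2`.
-/


/-- The Riemann zeta-function for real argument `x > 1`, as the series `∑_{n≥1} n^{-x}`. -/
noncomputable def rzeta (x : ℝ) : ℝ := ∑' n : ℕ, ((n : ℝ) + 1) ^ (-x)

/-- The Catalan constant `G = ∑_{n≥0} (-1)^n/(2n+1)^2`. -/
noncomputable def catalanConst : ℝ := ∑' n : ℕ, (-1 : ℝ) ^ n / (2 * (n : ℝ) + 1) ^ 2

/-- The term of the double series for the exponent `2(ℓ+1)+1` and the base `m = n + 2`. -/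
noncomputable def catalanTerm (n ℓ : ℕ) : ℝ :=
  (((ℓ : ℝ) + 1) / (16 : ℝ) ^ (ℓ + 1)) * (1 / ((n : ℝ) + 2) ^ (2 * ℓ + 3))

lemma catalanTerm_nonneg (n ℓ : ℕ) : 0 ≤ catalanTerm n ℓ := by
  unfold catalanTerm
  positivity

/-- For a fixed base the sum over exponents is `∑ ℓ x^ℓ = x/(1-x)²` at `x = 1/(16(n+2)²)`,
with the vanishing term `ℓ = 0` dropped. -/
lemma hasSum_catalanTerm_exponent (n : ℕ) :
    HasSum (catalanTerm n) (1 / (4 * (n : ℝ) + 7) ^ 2 - 1 / (4 * (n : ℝ) + 9) ^ 2) := by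
  have hm : (0 : ℝ) < (n : ℝ) + 2 := by positivity
  have hn : (0 : ℝ) ≤ n := by positivity
  have hx1 : 1 / (16 * ((n : ℝ) + 2) ^ 2) < 1 := by
    rw [div_lt_one (by positivity)]
    nlinarith
  have hx0 : 0 ≤ 1 / (16 * ((n : ℝ) + 2) ^ 2) := by positivity
  have h := hasSum_coe_mul_geometric_of_norm_lt_one
    (r := 1 / (16 * ((n : ℝ) + 2) ^ 2)) (by rwa [Real.norm_of_nonneg hx0])
  rw [← hasSum_nat_add_iff' 1] at h
  have h2 := h.mul_left (1 / ((n : ℝ) + 2))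
  -- The first goal compares two additive structures on the reals.
  convert h2 using 1
  · rfl
  · funext ℓ
    simp only [catalanTerm, div_pow, mul_pow, one_pow, Nat.cast_add, Nat.cast_one]
    rw [← pow_mul]
    field_simp
    ring
  · have e : 1 - 1 / (16 * ((n : ℝ) + 2) ^ 2) =
        ((4 * (n : ℝ) + 7) * (4 * (n : ℝ) + 9)) / (16 * ((n : ℝ) + 2) ^ 2) := by
      field_simp
      ring
    rw [e]
    simp only [Finset.range_one, Finset.sum_singleton, Nat.cast_zero, zero_mul, sub_zero]
    field_simp
    ring

lemma summable_one_div_pow_shift (k : ℕ) (hk : 1 < k) (c : ℕ) :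
    Summable (fun n : ℕ => 1 / ((n : ℝ) + c) ^ k) := by
  have h := (summable_nat_add_iff c).2 (Real.summable_one_div_nat_pow.2 hk)
  simpa using h

lemma hasSum_catalanTerm_base (ℓ : ℕ) :
    HasSum (fun n => catalanTerm n ℓ)
      ((((ℓ : ℝ) + 1) / (16 : ℝ) ^ (ℓ + 1)) * (rzeta (2 * ((ℓ : ℝ) + 1) + 1) - 1)) := by
  have hs := summable_one_div_pow_shift (2 * ℓ + 3) (by omega) 1
  have hz : rzeta (2 * ((ℓ : ℝ) + 1) + 1) =
      ∑' n : ℕ, 1 / ((n : ℝ) + (1 : ℕ)) ^ (2 * ℓ + 3) := by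
    unfold rzeta
    congr 1
    funext n
    rw [Real.rpow_neg (by positivity), one_div, Nat.cast_one, ← Real.rpow_natCast]
    congr 2
    push_cast
    ring
  have h := hs.hasSum
  rw [← hz, ← hasSum_nat_add_iff' 1] at h
  have h2 := h.mul_left (((ℓ : ℝ) + 1) / (16 : ℝ) ^ (ℓ + 1))
  -- The first goal compares two additive structures on the reals.
  convert h2 using 1
  · rfl
  · funext n
    simp only [catalanTerm]
    push_cast
    rw [add_assoc (n : ℝ) 1 1, one_add_one_eq_two]
  · simp

lemma catalanConst_eq :
    Summable (fun n : ℕ => 1 / (4 * (n : ℝ) + 7) ^ 2 - 1 / (4 * (n : ℝ) + 9) ^ 2) ∧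
    catalanConst =
      209 / 225 - ∑' n : ℕ, (1 / (4 * (n : ℝ) + 7) ^ 2 - 1 / (4 * (n : ℝ) + 9) ^ 2) := by
  have hbase := summable_one_div_pow_shift 2 (by norm_num) 1
  have hbound : ∀ c : ℝ, 1 ≤ c → Summable (fun n : ℕ => 1 / (4 * (n : ℝ) + c) ^ 2) := by
    intro c hc
    refine Summable.of_nonneg_of_le (fun n => by positivity) (fun n => ?_) hbase
    have hn : (0 : ℝ) ≤ n := by positivity
    push_cast
    gcongr
    linarith
  have h7 := hbound 7 (by norm_num)
  have h9 := hbound 9 (by norm_num)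
  have ha : Summable (fun n : ℕ => (-1 : ℝ) ^ n / (2 * (n : ℝ) + 1) ^ 2) := by
    refine Summable.of_norm_bounded hbase (fun n => ?_)
    have hn : (0 : ℝ) ≤ n := by positivity
    rw [norm_div, norm_pow, norm_neg, norm_one, one_pow, Real.norm_of_nonneg (by positivity)]
    push_cast
    gcongr
    linarith
  refine ⟨h7.sub h9, ?_⟩
  have hodd : ∀ n : ℕ, (-1 : ℝ) ^ (2 * n + 3) / (2 * ((2 * n + 3 : ℕ) : ℝ) + 1) ^ 2
      = -(1 / (4 * (n : ℝ) + 7) ^ 2) := by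
    intro n
    rw [pow_add, pow_mul]
    push_cast
    rw [show 2 * (2 * (n : ℝ) + 3) + 1 = 4 * n + 7 by ring]
    norm_num
    ring
  have heven : ∀ n : ℕ, (-1 : ℝ) ^ (2 * n + 1 + 3) / (2 * ((2 * n + 1 + 3 : ℕ) : ℝ) + 1) ^ 2
      = 1 / (4 * (n : ℝ) + 9) ^ 2 := by
    intro n
    rw [add_assoc, pow_add, pow_mul]
    push_cast
    rw [show 2 * (2 * (n : ℝ) + 4) + 1 = 4 * n + 9 by ring]
    norm_num
  have hsplit := tsum_even_add_odd
    (f := fun n : ℕ => (-1 : ℝ) ^ (n + 3) / (2 * ((n + 3 : ℕ) : ℝ) + 1) ^ 2)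
    (by simpa only [hodd] using h7.neg) (by simpa only [heven] using h9)
  simp only [hodd, heven] at hsplit
  unfold catalanConst
  rw [← ha.sum_add_tsum_nat_add 3, ← hsplit, h7.tsum_sub h9, tsum_neg]
  norm_num [Finset.sum_range_succ]
  ring

/-- The Catalan constant satisfies
`G = 209/225 - ∑_{ℓ=1}^∞ (ℓ/16^ℓ)(ζ(2ℓ+1)-1)`, the series converging absolutely. -/
theorem catalan_series :
    Summable (fun ℓ : ℕ =>
      |(((ℓ : ℝ) + 1) / (16 : ℝ) ^ (ℓ + 1)) * (rzeta (2 * ((ℓ : ℝ) + 1) + 1) - 1)|) ∧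
      catalanConst =
        209 / 225 -
          ∑' ℓ : ℕ, (((ℓ : ℝ) + 1) / (16 : ℝ) ^ (ℓ + 1)) * (rzeta (2 * ((ℓ : ℝ) + 1) + 1) - 1) := by
  obtain ⟨hg, hG⟩ := catalanConst_eq
  have hprod : Summable (fun p : ℕ × ℕ => catalanTerm p.1 p.2) := by
    refine (summable_prod_of_nonneg (fun p => catalanTerm_nonneg p.1 p.2)).2
      ⟨fun n => (hasSum_catalanTerm_exponent n).summable, ?_⟩
    simpa only [(hasSum_catalanTerm_exponent _).tsum_eq] using hg
  have h1 := hprod.hasSum.prod_fiberwise hasSum_catalanTerm_exponent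
  have h2 := ((Equiv.prodComm ℕ ℕ).hasSum_iff.2 hprod.hasSum).prod_fiberwise
    hasSum_catalanTerm_base
  exact ⟨h2.summable.abs, by rw [hG, h1.tsum_eq, h2.tsum_eq]⟩
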